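/- arXiv:1209.3342 — 2 statements merged into one kernel-verified Lean document; each statement's English description precedes it below -/
import Mathlib

section
/- Let I be a nonempty set and let f : ℕ → (ℝ ∪ {−∞})^I be eventually periodic with ratio ρ ∈ ℝ, and let π and σ both be periods of f. Then the minimal transient of f with respect to π equals the minimal transient of f with respect to σ. -/
/-!
If `x (n + p) = g (x n)` from `T` on and `x (n + q) = h (x n)` from `S` on, then for every `n ≥ T`
the second relation holds at `n + k * p` once `k` is large. By the first relation both of its sides
there are the images under `g^[k]` of its sides at `n`, as `g` and `h` commute, so for injective `g`
it already holds at `n`. Translations of `(ℝ ∪ {−∞})^I` by real constants are injective and commute.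
-/

/-- `T` is a transient of `f : ℕ → (ℝ ∪ {−∞})^I` with respect to period `π` and ratio `ρ`:
from index `T` on, `f_i (n + π) = f_i n + π·ρ` for every `i`. -/
def IsTransient {I : Type*} (f : ℕ → I → WithBot ℝ) (π : ℕ) (ρ : ℝ) (T : ℕ) : Prop :=
  ∀ i : I, ∀ n : ℕ, T ≤ n → f (n + π) i = f n i + (((π : ℝ) * ρ : ℝ) : WithBot ℝ)

open Function

section Sequence

variable {α : Type*} {x : ℕ → α} {g h : α → α} {p q S T : ℕ}

/-- `T` is a transient of the sequence `x` for the period `p` up to `g`. Eventual periodicity with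
ratio `ρ` is the case where `g` is the translation by `p * ρ`. -/
def IsTransientUnder (x : ℕ → α) (p : ℕ) (g : α → α) (T : ℕ) : Prop :=
  ∀ n, T ≤ n → x (n + p) = g (x n)

theorem IsTransientUnder.apply_add_mul (hx : IsTransientUnder x p g T) {n : ℕ} (hn : T ≤ n)
    (k : ℕ) : x (n + k * p) = g^[k] (x n) := by
  induction k with
  | zero => simp
  | succ k ih =>
    rw [Nat.succ_mul, ← add_assoc, hx _ (Nat.le_add_right_of_le hn), ih, iterate_succ_apply']

theorem IsTransientUnder.change_period (hxg : IsTransientUnder x p g T)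
    (hxh : IsTransientUnder x q h S) (hgh : Function.Commute g h) (hg : Injective g)
    (hp : 0 < p) : IsTransientUnder x q h T := by
  intro n hn
  have hS : S ≤ n + S * p := le_add_left (Nat.le_mul_of_pos_right S hp)
  apply hg.iterate S
  calc
    g^[S] (x (n + q)) = x (n + q + S * p) := (hxg.apply_add_mul (Nat.le_add_right_of_le hn) S).symm
    _ = x (n + S * p + q) := by rw [add_right_comm]
    _ = h (x (n + S * p)) := hxh _ hS
    _ = h (g^[S] (x n)) := by rw [hxg.apply_add_mul hn]
    _ = g^[S] (h (x n)) := ((hgh.iterate_left S).eq (x n)).symm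

theorem minimal_transient_independent_of_period_general (hgh : Function.Commute g h)
    (hg : Injective g) (hh : Injective h) (hp : 0 < p) (hq : 0 < q)
    (hT : IsLeast {t | IsTransientUnder x p g t} T)
    (hS : IsLeast {t | IsTransientUnder x q h t} S) : T = S :=
  le_antisymm (hT.2 (hS.1.change_period hT.1 hgh.symm hh hq))
    (hS.2 (hT.1.change_period hS.1 hgh hg hp))

end Sequence

section Translation

variable {I : Type*}

theorem isAddRightRegular_const_coe {M : Type*} [Add M] {c : M} (hc : IsAddRightRegular c) :
    IsAddRightRegular (const I (c : WithBot M)) :=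
  Pi.isAddRightRegular_iff.2 fun _ => hc.withBot

theorem isTransient_iff_isTransientUnder {f : ℕ → I → WithBot ℝ} {π : ℕ} {ρ : ℝ} {T : ℕ} :
    IsTransient f π ρ T ↔
      IsTransientUnder f π (· + const I ((π * ρ : ℝ) : WithBot ℝ)) T :=
  ⟨fun hf n hn => funext fun i => hf i n hn, fun hf i n hn => congrFun (hf n hn) i⟩

end Translation

/-- If `π` and `σ` are both periods of an eventually periodic `f` (with ratio `ρ`), then the
minimal transient of `f` with respect to `π` equals the minimal transient with respect to `σ`. -/
theorem minimal_transient_independent_of_period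
    {I : Type*} [Nonempty I] (f : ℕ → I → WithBot ℝ) (ρ : ℝ)
    (π σ : ℕ) (hπ : 0 < π) (hσ : 0 < σ)
    (hfπ : ∃ T, IsTransient f π ρ T) (hfσ : ∃ T, IsTransient f σ ρ T)
    (Tπ Tσ : ℕ)
    (hTπ : IsLeast {T | IsTransient f π ρ T} Tπ)
    (hTσ : IsLeast {T | IsTransient f σ ρ T} Tσ) :
    Tπ = Tσ := by
  simp only [isTransient_iff_isTransientUnder] at hTπ hTσ
  exact minimal_transient_independent_of_period_general (fun _ => add_right_comm _ _ _)
    (isAddRightRegular_const_coe (.all _)) (isAddRightRegular_const_coe (.all _)) hπ hσ hTπ hTσ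
end

section
/- Let S be a nonempty set of positive integers closed under addition and let d = gcd(S). Then: (i) all but finitely many multiples of d belong to S; and (ii) if a₁ ≤ a₂ ≤ … ≤ a_k are elements of S with gcd{a₁,…,a_k} = d, then every multiple n of d with n ≥ (a₁ − d)(a_k − d)/d belongs to S. -/
/-!
Rescaling by `d` reduces (ii) to generators of gcd `1`. Every residue class modulo `a` is then
represented by a sum of generators, and by fewer than `a` of them: among the partial sums of a
longer sum two agree modulo `a`, and the block between them can be dropped. Such a short sum is at
most `(a - 1) * b`, where `b` bounds the generators, so it is less than `n + a` as soon as
`(a - 1) * (b - 1) ≤ n`. Being congruent to `n` modulo `a`, it is at most `n`, and adding copies of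
`a` gives `n`.
-/

section Monoid

variable {M : Type*} [Monoid M]

@[to_additive]
theorem exists_sublist_length_lt_prod_eq_of_card_le [Finite M] (l : List M)
    (hl : Nat.card M ≤ l.length) :
    ∃ l' : List M, l'.Sublist l ∧ l'.length < l.length ∧ l'.prod = l.prod := by
  obtain ⟨i, j, hij, hprod⟩ : ∃ i j : Fin (l.length + 1), i < j ∧
      (l.take i).prod = (l.take j).prod := by
    have := Fintype.ofFinite M
    obtain ⟨i, j, hne, hprod⟩ := Fintype.exists_ne_map_eq_of_card_lt
      (fun k : Fin (l.length + 1) ↦ (l.take k).prod)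
      (by rw [Fintype.card_fin, ← Nat.card_eq_fintype_card]; exact Nat.lt_succ_of_le hl)
    obtain hij | hji := hne.lt_or_gt
    exacts [⟨i, j, hij, hprod⟩, ⟨j, i, hji, hprod.symm⟩]
  refine ⟨l.take i ++ l.drop j, ?_, ?_, ?_⟩
  · calc (l.take i ++ l.drop j).Sublist (l.take j ++ l.drop j) :=
        (l.take_sublist_take_left hij.le).append_right _
      _ = l := l.take_append_drop j
  · simp only [List.length_append, List.length_take, List.length_drop]
    omega
  · rw [List.prod_append, hprod, List.prod_take_mul_prod_drop]

@[to_additive]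
theorem exists_sublist_length_lt_card_prod_eq [Finite M] (l : List M) :
    ∃ l' : List M, l'.Sublist l ∧ l'.length < Nat.card M ∧ l'.prod = l.prod := by
  induction hn : l.length using Nat.strong_induction_on generalizing l with
  | _ n ih =>
    obtain hlt | hle := lt_or_ge l.length (Nat.card M)
    · exact ⟨l, .refl l, hlt, rfl⟩
    obtain ⟨l₁, hsub₁, hlen₁, hprod₁⟩ := exists_sublist_length_lt_prod_eq_of_card_le l hle
    obtain ⟨l₂, hsub₂, hlen₂, hprod₂⟩ := ih l₁.length (hn ▸ hlen₁) l₁ rfl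
    exact ⟨l₂, hsub₂.trans hsub₁, hlen₂, hprod₂.trans hprod₁⟩

@[to_additive]
theorem eq_one_or_mem_of_mem_closure {s : Set M} (hmul : ∀ a ∈ s, ∀ b ∈ s, a * b ∈ s) {x : M}
    (hx : x ∈ Submonoid.closure s) : x = 1 ∨ x ∈ s := by
  induction hx using Submonoid.closure_induction with
  | mem x hx => exact .inr hx
  | one => exact .inl rfl
  | mul x y _ _ ihx ihy =>
    obtain rfl | hx := ihx
    · simpa using ihy
    obtain rfl | hy := ihy
    · simpa using Or.inr hx
    · exact .inr (hmul x hx y hy)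

end Monoid

section SetGcd

variable {s : Set ℕ} {a b d m n : ℕ}

theorem setGcd_eq_of_forall_dvd (hdvd : ∀ x ∈ s, n ∣ x) (hgr : ∀ e, (∀ x ∈ s, e ∣ x) → e ∣ n) :
    Nat.setGcd s = n :=
  Nat.dvd_antisymm (hgr _ fun _ ↦ Nat.setGcd_dvd_of_mem) (Nat.dvd_setGcd_iff.2 hdvd)

theorem setGcd_coe_finset (A : Finset ℕ) : Nat.setGcd (A : Set ℕ) = A.gcd id :=
  setGcd_eq_of_forall_dvd (fun _ ↦ Finset.gcd_dvd) fun _ ↦ Finset.dvd_gcd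

theorem setGcd_image_mul_left (d : ℕ) (s : Set ℕ) :
    Nat.setGcd ((d * ·) '' s) = d * Nat.setGcd s := by
  obtain rfl | hd := d.eq_zero_or_pos
  · simp [Nat.setGcd_eq_zero_iff]
  refine Nat.dvd_antisymm ?_ ?_
  · obtain ⟨e, he⟩ : d ∣ Nat.setGcd ((d * ·) '' s) :=
      Nat.dvd_setGcd_iff.2 (Set.forall_mem_image.2 fun x _ ↦ dvd_mul_right d x)
    rw [he]
    refine mul_dvd_mul_left d (Nat.dvd_setGcd_iff.2 fun x hx ↦ ?_)
    refine Nat.dvd_of_mul_dvd_mul_left hd ?_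
    rw [← he]
    exact Nat.setGcd_dvd_of_mem (Set.mem_image_of_mem _ hx)
  · exact Nat.dvd_setGcd_iff.2 (Set.forall_mem_image.2 fun x hx ↦
      mul_dvd_mul_left d (Nat.setGcd_dvd_of_mem hx))

theorem exists_list_length_lt_sum_modEq_of_mem_closure (hm : m ≠ 0)
    (hn : n ∈ AddSubmonoid.closure s) :
    ∃ l : List ℕ, (∀ x ∈ l, x ∈ s) ∧ l.length < m ∧ l.sum ≡ n [MOD m] := by
  have : NeZero m := ⟨hm⟩
  obtain ⟨l, hls, rfl⟩ := AddSubmonoid.exists_list_of_mem_closure hn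
  obtain ⟨l', hsub, hlen, hsum⟩ :=
    exists_sublist_length_lt_card_sum_eq (l.map (Nat.cast : ℕ → ZMod m))
  obtain ⟨k, hkl, rfl⟩ := List.sublist_map_iff.1 hsub
  refine ⟨k, fun x hx ↦ hls x (hkl.subset hx), by simpa using hlen, ?_⟩
  rwa [← ZMod.natCast_eq_natCast_iff, Nat.cast_list_sum, Nat.cast_list_sum]

theorem exists_mem_closure_modEq (ha : a ∈ s) (ha0 : a ≠ 0) (hn : Nat.setGcd s ∣ n) :
    ∃ k ∈ AddSubmonoid.closure s, k ≡ n [MOD a] := by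
  obtain ⟨N, hN⟩ := Nat.exists_mem_closure_of_ge s
  have hge : N ≤ n + N * a :=
    (Nat.le_mul_of_pos_right N (Nat.pos_of_ne_zero ha0)).trans (Nat.le_add_left _ _)
  have hdvd : Nat.setGcd s ∣ n + N * a := dvd_add hn ((Nat.setGcd_dvd_of_mem ha).mul_left N)
  exact ⟨n + N * a, hN _ hge hdvd, by simp [Nat.ModEq]⟩

theorem mem_closure_of_modEq_of_lt_add (ha : a ∈ s) (hm : m ∈ AddSubmonoid.closure s)
    (hmod : m ≡ n [MOD a]) (hlt : m < n + a) : n ∈ AddSubmonoid.closure s := by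
  obtain ⟨t, rfl⟩ := (Nat.modEq_iff_exists_eq_add (hmod.le_of_lt_add hlt)).1 hmod
  rw [mul_comm, ← smul_eq_mul]
  exact add_mem hm (nsmul_mem (AddSubmonoid.subset_closure ha) t)

theorem mem_closure_of_sub_one_mul_sub_one_le (hs : Nat.setGcd s = 1) (ha : a ∈ s) (ha0 : a ≠ 0)
    (hb : b ∈ upperBounds s) (hn : (a - 1) * (b - 1) ≤ n) : n ∈ AddSubmonoid.closure s := by
  obtain ⟨k, hk, hkn⟩ := exists_mem_closure_modEq ha ha0 (hs ▸ one_dvd n)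
  obtain ⟨l, hls, hlen, hmod⟩ := exists_list_length_lt_sum_modEq_of_mem_closure ha0 hk
  have hlt : l.sum < n + a :=
    calc l.sum ≤ l.length * b := List.sum_le_card_nsmul _ _ fun x hx ↦ hb (hls x hx)
      _ ≤ (a - 1) * b := Nat.mul_le_mul_right b (Nat.le_sub_one_of_lt hlen)
      _ = (a - 1) * (b - 1) + (a - 1) := by
        rw [← Nat.mul_add_one, Nat.sub_add_cancel ((Nat.pos_of_ne_zero ha0).trans_le (hb ha))]
      _ < n + a := by omega
  exact mem_closure_of_modEq_of_lt_add ha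
    (list_sum_mem fun x hx ↦ AddSubmonoid.subset_closure (hls x hx)) (hmod.trans hkn) hlt

theorem mem_closure_of_sub_mul_sub_le (hs : Nat.setGcd s = d) (ha : a ∈ s) (ha0 : a ≠ 0)
    (hb : b ∈ upperBounds s) (hdn : d ∣ n) (hn : (a - d) * (b - d) ≤ d * n) :
    n ∈ AddSubmonoid.closure s := by
  have hdvd : ∀ x ∈ s, d ∣ x := Nat.dvd_setGcd_iff.1 hs.symm.dvd
  have hd : 0 < d := Nat.pos_of_dvd_of_pos (hdvd a ha) (Nat.pos_of_ne_zero ha0)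
  obtain ⟨t, rfl⟩ : ∃ t, (d * ·) '' t = s :=
    Set.subset_range_iff_exists_image_eq.1 fun x hx ↦ (hdvd x hx).imp fun _ ↦ Eq.symm
  obtain ⟨a, hat, rfl⟩ := ha
  obtain ⟨n, rfl⟩ := hdn
  have ht : Nat.setGcd t = 1 := by
    rwa [setGcd_image_mul_left, Nat.mul_eq_left hd.ne'] at hs
  have hbt : b / d ∈ upperBounds t := fun x hx ↦
    (Nat.le_div_iff_mul_le hd).2 (mul_comm x d ▸ hb (Set.mem_image_of_mem _ hx))
  have hnt : (a - 1) * (b / d - 1) ≤ n := by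
    refine Nat.le_of_mul_le_mul_left (Nat.le_of_mul_le_mul_left ?_ hd) hd
    calc d * (d * ((a - 1) * (b / d - 1))) = (d * a - d) * (d * (b / d) - d) := by
          rw [← Nat.mul_sub_one, ← Nat.mul_sub_one]; ring
      _ ≤ (d * a - d) * (b - d) := by gcongr; exact Nat.mul_div_le b d
      _ ≤ d * (d * n) := hn
  have hmem : n ∈ AddSubmonoid.closure t :=
    mem_closure_of_sub_one_mul_sub_one_le ht hat (right_ne_zero_of_mul ha0) hbt hnt
  exact AddMonoidHom.map_mclosure (AddMonoidHom.mulLeft d) t ▸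
    AddSubmonoid.mem_map_of_mem (AddMonoidHom.mulLeft d) hmem

end SetGcd

/-- Brauer-type lemma: a nonempty set `S` of positive integers closed under addition contains
all but finitely many multiples of its gcd `d`; moreover, if `A` is a finite gcd-generator of
`S` with minimum `a₁` and maximum `a_k`, then every positive multiple `n` of `d` with
`n ≥ (a₁ − d)(a_k − d)/d` belongs to `S`. -/
theorem semigroup_contains_large_multiples_of_gcd
    (S : Set ℕ) (hne : S.Nonempty) (hpos : ∀ a ∈ S, 0 < a)
    (hadd : ∀ a ∈ S, ∀ b ∈ S, a + b ∈ S)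
    (d : ℕ) (hdvd : ∀ a ∈ S, d ∣ a) (hgr : ∀ e : ℕ, (∀ a ∈ S, e ∣ a) → e ∣ d) :
    {m : ℕ | d ∣ m ∧ m ∉ S}.Finite ∧
    ∀ (A : Finset ℕ) (hA : A.Nonempty), (↑A : Set ℕ) ⊆ S → A.gcd id = d →
      ∀ n : ℕ, 0 < n → d ∣ n →
        (A.min' hA - d) * (A.max' hA - d) ≤ d * n → n ∈ S := by
  have hS : Nat.setGcd S = d := setGcd_eq_of_forall_dvd hdvd hgr
  constructor
  · refine ((Nat.finite_setOfPred_setGcd_dvd_and_mem_span S).insert 0).subset ?_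
    rintro m ⟨hdm, hmS⟩
    refine or_iff_not_imp_left.2 fun hm0 ↦ ⟨hS ▸ hdm, fun hm ↦ hmS ?_⟩
    exact (eq_zero_or_mem_of_mem_closure hadd
      ((Submodule.span_nat_eq_addSubmonoidClosure S).le hm)).resolve_left hm0
  · intro A hA hAS hgcd n hn hdn hle
    have hmem : n ∈ AddSubmonoid.closure (A : Set ℕ) :=
      mem_closure_of_sub_mul_sub_le ((setGcd_coe_finset A).trans hgcd) (A.min'_mem hA)
        (hpos _ (hAS (A.min'_mem hA))).ne' (fun x hx ↦ A.le_max' x hx) hdn hle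
    exact (eq_zero_or_mem_of_mem_closure hadd
      (AddSubmonoid.closure_mono hAS hmem)).resolve_left hn.ne'
end
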